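/- For the Gaussian measure μ_A with trace-class covariance A on a separable Hilbert space H and b in the image of A, the translation formula ∫ f(x) dμ_A(x) = ∫ f(x+b) e^{-(1/2)⟨b, A⁻¹b⟩ - ⟨x, A⁻¹b⟩} dμ_A(x) holds for all bounded measurable f. -/

import Mathlib

open MeasureTheory ProbabilityTheory
open scoped RealInnerProductSpace

/-!
Tilting a Gaussian measure `μ` by a continuous linear form `L` multiplies the moment generating
function of every continuous linear form `M` by `t ↦ exp (t * cov[M, L; μ])`: each marginal keeps
its variance and has its mean shifted by `cov[M, L; μ]`. If these shifts are the values `M b` at a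
vector `b`, the tilted measure is therefore the translate of `μ` by `b`. On a Hilbert space with
covariance operator `A`, the form `⟪c, ·⟫` shifts by `b = A c`; the formula follows on tilting by
its negative.
-/

section MGF

variable {Ω Ω' : Type*} {mΩ : MeasurableSpace Ω} {mΩ' : MeasurableSpace Ω'}
  {μ : Measure Ω} {ν : Measure Ω'} {X : Ω → ℝ} {Y : Ω' → ℝ}

lemma map_eq_map_of_mgf_eq [IsProbabilityMeasure μ] [IsFiniteMeasure ν]
    (hX : AEMeasurable X μ) (hY : AEMeasurable Y ν)
    (h_zero : 0 ∈ interior (integrableExpSet X μ)) (h_mgf : mgf X μ = mgf Y ν) :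
    μ.map X = ν.map Y := by
  refine Measure.ext_of_charFun (funext fun t ↦ ?_)
  rw [← complexMGF_mul_I hX, ← complexMGF_mul_I hY]
  exact eqOn_complexMGF_of_mgf h_mgf (by simpa using h_zero)

lemma map_eq_gaussianReal_of_mgf_eq [IsFiniteMeasure μ] (hX : AEMeasurable X μ) {m : ℝ}
    {v : NNReal} (h : ∀ t, mgf X μ t = Real.exp (m * t + v * t ^ 2 / 2)) :
    μ.map X = gaussianReal m v := by
  have h_mgf : mgf id (gaussianReal m v) = mgf X μ := by
    rw [mgf_id_gaussianReal]
    exact funext fun t ↦ (h t).symm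
  simpa using (map_eq_map_of_mgf_eq aemeasurable_id hX (by simp) h_mgf).symm

end MGF

section Dual

variable {E F : Type*} [NormedAddCommGroup E] [NormedSpace ℝ E] [MeasurableSpace E]
  [NormedAddCommGroup F] [NormedSpace ℝ F] {μ : Measure E} [IsGaussian μ]

lemma integral_exp_dual (L : StrongDual ℝ E) :
    ∫ x, Real.exp (L x) ∂μ = Real.exp (μ[L] + Var[L; μ] / 2) := by
  simpa [mgf, variance_nonneg] using mgf_gaussianReal (IsGaussian.map_eq_gaussianReal (μ := μ) L) 1

lemma integrable_exp_dual (L : StrongDual ℝ E) : Integrable (fun x ↦ Real.exp (L x)) μ :=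
  .of_integral_ne_zero (by rw [integral_exp_dual]; positivity)

variable [BorelSpace E]

lemma mgf_dual_tilted (L M : StrongDual ℝ E) (t : ℝ) :
    mgf M (μ.tilted L) t
      = Real.exp ((μ[M] + cov[M, L; μ]) * t + Var[M; μ] * t ^ 2 / 2) := by
  have hL : MemLp L 2 μ := IsGaussian.memLp_dual μ L 2 (by simp)
  have hM : MemLp M 2 μ := IsGaussian.memLp_dual μ M 2 (by simp)
  have h_mean : μ[⇑(L + t • M)] = μ[L] + t * μ[M] := by
    simp only [FunLike.coe_add, FunLike.coe_smul, Pi.add_apply, Pi.smul_apply, smul_eq_mul]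
    rw [integral_add (by fun_prop) (by fun_prop), integral_const_mul]
  have h_var : Var[⇑(L + t • M); μ]
      = Var[L; μ] + 2 * (t * cov[M, L; μ]) + t ^ 2 * Var[M; μ] := by
    rw [FunLike.coe_add, FunLike.coe_smul, variance_add hL (hM.const_smul t),
      covariance_smul_right, covariance_comm, variance_smul]
  calc mgf M (μ.tilted L) t
    _ = (∫ x, Real.exp ((L + t • M) x) ∂μ) / ∫ x, Real.exp (L x) ∂μ :=
        integral_exp_tilted L (t • ⇑M)
    _ = Real.exp ((μ[M] + cov[M, L; μ]) * t + Var[M; μ] * t ^ 2 / 2) := by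
        rw [integral_exp_dual, integral_exp_dual, h_mean, h_var, ← Real.exp_sub]
        ring_nf

lemma map_dual_tilted (L M : StrongDual ℝ E) :
    (μ.tilted L).map M = gaussianReal (μ[M] + cov[M, L; μ]) Var[M; μ].toNNReal := by
  have := isProbabilityMeasure_tilted (integrable_exp_dual (μ := μ) L)
  refine map_eq_gaussianReal_of_mgf_eq (by fun_prop) fun t ↦ ?_
  rw [mgf_dual_tilted, Real.coe_toNNReal _ (variance_nonneg M μ)]

lemma map_dual_map_add_const (M : StrongDual ℝ E) (b : E) :
    (μ.map (· + b)).map M = gaussianReal (μ[M] + M b) Var[M; μ].toNNReal := by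
  rw [Measure.map_map (by fun_prop) (by fun_prop), ← gaussianReal_map_add_const,
    ← IsGaussian.map_eq_gaussianReal, Measure.map_map (by fun_prop) (by fun_prop)]
  congr 1
  ext x
  simp

variable [CompleteSpace E] [SecondCountableTopology E]

theorem tilted_dual_eq_map_add_const {L : StrongDual ℝ E} {b : E}
    (hb : ∀ M : StrongDual ℝ E, cov[M, L; μ] = M b) : μ.tilted L = μ.map (· + b) := by
  have := isProbabilityMeasure_tilted (integrable_exp_dual (μ := μ) L)
  refine Measure.ext_of_charFunDual (funext fun M ↦ ?_)
  rw [charFunDual_eq_charFun_map_one, charFunDual_eq_charFun_map_one, map_dual_tilted, hb,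
    map_dual_map_add_const]

lemma map_tilted_neg_dual_add_const {L : StrongDual ℝ E} {b : E}
    (hb : ∀ M : StrongDual ℝ E, cov[M, L; μ] = M b) :
    (μ.tilted (-L)).map (· + b) = μ := by
  have h_neg (M : StrongDual ℝ E) : cov[M, ⇑(-L); μ] = M (-b) := by
    rw [FunLike.coe_neg, covariance_neg_right, hb, map_neg]
  rw [← FunLike.coe_neg, tilted_dual_eq_map_add_const h_neg,
    Measure.map_map (by fun_prop) (by fun_prop)]
  simp [Function.comp_def]

theorem integrable_exp_dual_smul_comp_add_iff {L : StrongDual ℝ E} {b : E}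
    (hb : ∀ M : StrongDual ℝ E, cov[M, L; μ] = M b) {f : E → F} :
    Integrable (fun x ↦ Real.exp (μ[L] - Var[L; μ] / 2 - L x) • f (x + b)) μ
      ↔ Integrable f μ := by
  have h_exp : Integrable (fun x ↦ Real.exp (-L x)) μ := integrable_exp_dual (-L)
  have h_scale (x : E) : Real.exp (μ[L] - Var[L; μ] / 2 - L x) • f (x + b)
      = Real.exp (μ[L] - Var[L; μ] / 2) • Real.exp (-L x) • f (x + b) := by
    rw [smul_smul, ← Real.exp_add, sub_eq_add_neg _ (L x)]
  calc Integrable (fun x ↦ Real.exp (μ[L] - Var[L; μ] / 2 - L x) • f (x + b)) μ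
    _ ↔ Integrable (fun x ↦ Real.exp (-L x) • f (x + b)) μ := by
        simp_rw [h_scale]
        exact integrable_smul_iff (Real.exp_pos _).ne' _
    _ ↔ Integrable (fun x ↦ f (x + b)) (μ.tilted (-L)) := (integrable_tilted_iff h_exp _).symm
    _ ↔ Integrable f ((μ.tilted (-L)).map (· + b)) :=
        (measurableEmbedding_addRight b).integrable_map_iff.symm
    _ ↔ Integrable f μ := by rw [map_tilted_neg_dual_add_const hb]

theorem integral_eq_integral_exp_dual_smul_comp_add {L : StrongDual ℝ E} {b : E}
    (hb : ∀ M : StrongDual ℝ E, cov[M, L; μ] = M b) (f : E → F) :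
    ∫ x, f x ∂μ = ∫ x, Real.exp (μ[L] - Var[L; μ] / 2 - L x) • f (x + b) ∂μ := by
  have h_norm : ∫ x, Real.exp (-L x) ∂μ = Real.exp (-μ[L] + Var[L; μ] / 2) := by
    simpa [integral_neg, variance_neg] using integral_exp_dual (μ := μ) (-L)
  calc ∫ x, f x ∂μ
    _ = ∫ x, f x ∂(μ.tilted (-L)).map (· + b) := by rw [map_tilted_neg_dual_add_const hb]
    _ = ∫ x, f (x + b) ∂μ.tilted (-L) := (measurableEmbedding_addRight b).integral_map f
    _ = ∫ x, (Real.exp (-L x) / ∫ y, Real.exp (-L y) ∂μ) • f (x + b) ∂μ :=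
        integral_tilted _ _
    _ = ∫ x, Real.exp (μ[L] - Var[L; μ] / 2 - L x) • f (x + b) ∂μ := by
        refine integral_congr_ae (.of_forall fun x ↦ ?_)
        simp only [h_norm, ← Real.exp_sub]
        ring_nf

end Dual

section Hilbert

section Diagonal

variable {ι 𝕜 E : Type*} [RCLike 𝕜] [NormedAddCommGroup E] [InnerProductSpace 𝕜 E]
  {A : E →L[𝕜] E} {lam : ι → ℝ}

lemma hasSum_inner_apply_of_diagonal (e : HilbertBasis ι 𝕜 E)
    (hA : ∀ i, A (e i) = (lam i : 𝕜) • e i) (x y : E) :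
    HasSum (fun i ↦ (lam i : 𝕜) * (inner 𝕜 x (e i) * inner 𝕜 (e i) y)) (inner 𝕜 x (A y)) := by
  have h := ((e.hasSum_repr y).mapL A).mapL (innerSL 𝕜 x)
  simpa [hA, inner_smul_right, e.repr_apply_apply, mul_comm, mul_assoc,
    mul_left_comm] using h

lemma isPositive_of_diagonal (e : HilbertBasis ι 𝕜 E)
    (hA : ∀ i, A (e i) = (lam i : 𝕜) • e i) (hlam : ∀ i, 0 ≤ lam i) : A.IsPositive := by
  have h_symm (x y : E) : inner 𝕜 (A x) y = inner 𝕜 x (A y) := by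
    rw [← inner_conj_symm]
    refine ((RCLike.hasSum_conj' 𝕜).mpr (hasSum_inner_apply_of_diagonal e hA y x)).unique ?_
    simpa [mul_comm] using hasSum_inner_apply_of_diagonal e hA x y
  refine ⟨h_symm, fun x ↦ ?_⟩
  rw [ContinuousLinearMap.reApplyInnerSelf_apply, h_symm]
  refine (RCLike.hasSum_re 𝕜 (hasSum_inner_apply_of_diagonal e hA x x)).nonneg fun i ↦ ?_
  rw [RCLike.re_ofReal_mul, inner_mul_symm_re_eq_norm]
  exact mul_nonneg (hlam i) (norm_nonneg _)

end Diagonal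

variable {H F : Type*} [NormedAddCommGroup H] [InnerProductSpace ℝ H] [CompleteSpace H]
  [MeasurableSpace H] [BorelSpace H] [NormedAddCommGroup F] [NormedSpace ℝ F]
  {μ : Measure H} {A : H →L[ℝ] H}

lemma isGaussian_of_map_inner_eq_gaussianReal
    (h : ∀ x : H, ∃ m v, μ.map (fun y ↦ ⟪x, y⟫) = gaussianReal m v) : IsGaussian μ := by
  refine isGaussian_of_map_eq_gaussianReal fun L ↦ ?_
  obtain ⟨x, rfl⟩ := (InnerProductSpace.toDual ℝ H).surjective L
  exact h x

lemma covarianceBilin_eq_inner_of_variance_eq [IsFiniteMeasure μ] (h_memLp : MemLp id 2 μ)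
    (hA : (A : H →ₗ[ℝ] H).IsSymmetric) (h_var : ∀ x : H, Var[fun y ↦ ⟪x, y⟫; μ] = ⟪x, A x⟫)
    (x y : H) : covarianceBilin μ x y = ⟪x, A y⟫ := by
  have h_symm : (LinearMap.BilinForm.compRight (innerₗ H) (A : H →ₗ[ℝ] H)).IsSymm :=
    ⟨fun x y ↦ by simpa [real_inner_comm] using (hA x y).symm⟩
  refine LinearMap.congr_fun₂ (LinearMap.BilinForm.ext_of_isSymm
    isPosSemidef_covarianceBilin.isSymm h_symm fun x ↦ ?_) x y
  simp [covarianceBilin_self h_memLp, h_var]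

lemma covariance_dual_innerSL_of_variance_eq [IsFiniteMeasure μ] (h_memLp : MemLp id 2 μ)
    (hA : (A : H →ₗ[ℝ] H).IsSymmetric) (h_var : ∀ x : H, Var[fun y ↦ ⟪x, y⟫; μ] = ⟪x, A x⟫)
    (M : StrongDual ℝ H) (c : H) : cov[M, innerSL ℝ c; μ] = M (A c) := by
  obtain ⟨x, rfl⟩ := (InnerProductSpace.toDual ℝ H).surjective M
  exact (covarianceBilin_apply_eq_cov h_memLp x c).symm.trans
    (covarianceBilin_eq_inner_of_variance_eq h_memLp hA h_var x c)

theorem stmt8_general [TopologicalSpace.SeparableSpace H] (hA : A.IsPositive)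
    (hμ : ∀ β : H, μ.map (fun x ↦ ⟪β, x⟫) = gaussianReal 0 (Real.toNNReal ⟪β, A β⟫))
    (c : H) {f : H → F} (hf : Integrable f μ) :
    Integrable (fun x ↦ Real.exp (-(1 / 2) * ⟪A c, c⟫ - ⟪x, c⟫) • f (x + A c)) μ ∧
      ∫ x, f x ∂μ = ∫ x, Real.exp (-(1 / 2) * ⟪A c, c⟫ - ⟪x, c⟫) • f (x + A c) ∂μ := by
  have : SecondCountableTopology H := UniformSpace.secondCountable_of_separable H
  have : IsGaussian μ := isGaussian_of_map_inner_eq_gaussianReal fun β ↦ ⟨_, _, hμ β⟩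
  have h_law (β : H) : HasLaw (innerSL ℝ β) (gaussianReal 0 (Real.toNNReal ⟪β, A β⟫)) μ :=
    ⟨by fun_prop, hμ β⟩
  have h_mean : μ[innerSL ℝ c] = 0 := by
    rw [(h_law c).integral_eq, integral_id_gaussianReal]
  have h_var (β : H) : Var[innerSL ℝ β; μ] = ⟪β, A β⟫ := by
    rw [(h_law β).variance_eq, variance_id_gaussianReal,
      Real.coe_toNNReal _ (hA.inner_nonneg_right β)]
  have h_cov (M : StrongDual ℝ H) : cov[M, innerSL ℝ c; μ] = M (A c) :=
    covariance_dual_innerSL_of_variance_eq IsGaussian.memLp_two_id hA.isSymmetric h_var M c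
  have h_exponent (x : H) : -(1 / 2) * ⟪A c, c⟫ - ⟪x, c⟫
      = μ[innerSL ℝ c] - Var[innerSL ℝ c; μ] / 2 - innerSL ℝ c x := by
    rw [h_mean, h_var, innerSL_apply_apply, real_inner_comm c, real_inner_comm c]
    ring
  simp_rw [h_exponent]
  exact ⟨(integrable_exp_dual_smul_comp_add_iff h_cov).mpr hf,
    integral_eq_integral_exp_dual_smul_comp_add h_cov f⟩

end Hilbert

/-- Cameron–Martin translation formula for the Gaussian measure
μ_A with positive injective diagonal trace-class covariance A: for b = Ac in
the image of A and every bounded measurable f,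
∫ f(x) dμ_A(x) = ∫ f(x+b) e^{-(1/2)⟨b,A⁻¹b⟩ - ⟨x,A⁻¹b⟩} dμ_A(x). -/
theorem stmt8 {H : Type*} [NormedAddCommGroup H] [InnerProductSpace ℝ H]
    [CompleteSpace H] [TopologicalSpace.SeparableSpace H] [MeasurableSpace H]
    [BorelSpace H]
    (A : H →L[ℝ] H) (hinj : Function.Injective A)
    (e : ℕ → H) (lam : ℕ → ℝ)
    (he : Orthonormal ℝ e)
    (hbasis : ⊤ ≤ Submodule.topologicalClosure (Submodule.span ℝ (Set.range e)))
    (hlam : ∀ i, 0 < lam i) (htrace : Summable lam)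
    (hdiag : ∀ i, A (e i) = lam i • e i)
    (μ : Measure H)
    (hμ : ∀ β : H, Measure.map (fun x => ⟪β, x⟫) μ
      = gaussianReal 0 (Real.toNNReal ⟪β, A β⟫))
    (c : H) (b : H) (hb : b = A c)
    (f : H → ℝ) (hf : Measurable f) (hbdd : ∃ C, ∀ x, |f x| ≤ C) :
    ∫ x, f x ∂μ
      = ∫ x, f (x + b) * Real.exp (-(1 / 2) * ⟪b, c⟫ - ⟪x, c⟫) ∂μ := by
  obtain ⟨C, hC⟩ := hbdd
  subst hb
  have hA : A.IsPositive := isPositive_of_diagonal (HilbertBasis.mk he hbasis)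
    (by simpa using hdiag) fun i ↦ (hlam i).le
  have : IsGaussian μ := isGaussian_of_map_inner_eq_gaussianReal fun β ↦ ⟨_, _, hμ β⟩
  have h_int : Integrable f μ := .of_bound hf.aestronglyMeasurable C (.of_forall hC)
  simpa only [smul_eq_mul, mul_comm] using (stmt8_general hA hμ c h_int).2
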